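/- arXiv:math/0612331 — 2 statements merged into one kernel-verified Lean document; each statement's English description precedes it below -/
import Mathlib

section
/- Let H be an induced subgraph of a graph G with mr(F₂,H) = k, and suppose G ∈ F_{k+1}(F₂,H). If |V(G)| − |V(H)| ≥ 3, then every vertex of G−H is adjacent in G to at least one vertex of H (i.e., G−H contains no vertex whose weight vector with respect to H is the zero vector). -/
/-!
Suppose `z ∉ W` has no neighbour in `W`. For `u ∉ W` other than `z`, a matrix of `G - u` of rank
at most `k = mr(F, G[W])` contains a matrix of `G[W]` as a principal submatrix, which has rank at
least `k`. So the rows indexed by `W` already determine the kernel of the large matrix, and the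
column of `z`, which vanishes in those rows, is zero: `z` is isolated in `G - u`. Since at least two
choices of `u` are available, `z` is isolated in `G`. Adjoining a zero row and a zero column to a
matrix of `G - z` then gives `mr(F, G) ≤ mr(F, G - z) ≤ k`, a contradiction.
-/

open Matrix

/-- `A` is a symmetric matrix over `F` whose off-diagonal nonzero pattern is
given by the graph `G` (diagonal entries are unconstrained). -/
def IsGraphMatrix (F : Type*) [Field F] {V : Type*} (G : SimpleGraph V)
    (A : Matrix V V F) : Prop :=
  A.IsSymm ∧ ∀ i j : V, i ≠ j → (A i j ≠ 0 ↔ G.Adj i j)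

/-- The minimum rank `mr(F, G)` of the graph `G` over the field `F`. -/
noncomputable def minRank (F : Type*) [Field F] {V : Type*} [Fintype V]
    (G : SimpleGraph V) : ℕ :=
  sInf {r : ℕ | ∃ A : Matrix V V F, IsGraphMatrix F G A ∧ A.rank = r}

/-- The graph `G - v` obtained from `G` by deleting the vertex `v`. -/
def deleteVert {V : Type*} (G : SimpleGraph V) (v : V) : SimpleGraph {u : V // u ≠ v} :=
  SimpleGraph.comap Subtype.val G

/-- The induced subgraph of `G` on a finite set `W` of vertices. -/
def inducedSub {V : Type*} (G : SimpleGraph V) (W : Finset V) :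
    SimpleGraph {x : V // x ∈ W} :=
  SimpleGraph.comap Subtype.val G

section Rank

variable {F m n p q : Type*} [Field F] [Fintype n] [Fintype q]

lemma col_eq_zero_of_rank_le_rank_submatrix {A : Matrix m n F} {r : p → m} {c : q → n}
    (hrank : A.rank ≤ (A.submatrix r c).rank) {j : n} (hj : ∀ i, A (r i) j = 0) :
    A.col j = 0 := by
  classical
  have hker : LinearMap.ker A.mulVecLin = LinearMap.ker (A.submatrix r id).mulVecLin := by
    have hle : LinearMap.ker A.mulVecLin ≤ LinearMap.ker (A.submatrix r id).mulVecLin :=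
      fun x hx => funext fun i => congrFun hx (r i)
    have hrows : A.rank ≤ (A.submatrix r id).rank :=
      hrank.trans ((A.submatrix r id).rank_submatrix_le id c)
    refine Submodule.eq_of_le_of_finrank_le hle ?_
    have hA := A.mulVecLin.finrank_range_add_finrank_ker
    have hB := (A.submatrix r id).mulVecLin.finrank_range_add_finrank_ker
    simp only [Matrix.rank] at hrows
    omega
  have hmem : Pi.single j 1 ∈ LinearMap.ker (A.submatrix r id).mulVecLin := by
    rw [LinearMap.mem_ker, mulVecLin_apply, mulVec_single_one]
    exact funext hj
  rwa [← hker, LinearMap.mem_ker, mulVecLin_apply, mulVec_single_one] at hmem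

end Rank

section ZeroExtend

variable {R S U V : Type*} [Semiring R] [CommSemiring S] [Fintype U] [DecidableEq V]

/-- The extension of a square matrix by zero along a map `f` of index types. It is encoded as a
product `P * A * Pᵀ` with `P` the 0-1 matrix of `f`, so that its rank is at most that of `A`; for
`f` injective its `(f i, f j)` entry is `A i j`, and its other entries vanish. -/
def zeroExtend (f : U → V) (A : Matrix U U R) : Matrix V V R :=
  (1 : Matrix V V R).submatrix id f * A * ((1 : Matrix V V R).submatrix id f)ᵀ

lemma zeroExtend_apply_apply (f : U ↪ V) (A : Matrix U U R) (i j : U) :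
    zeroExtend f A (f i) (f j) = A i j := by
  classical
  simp [zeroExtend, mul_apply, one_apply]

lemma zeroExtend_apply_eq_zero {f : U → V} {v : V} (hv : v ∉ Set.range f) (A : Matrix U U R)
    (w : V) : zeroExtend f A v w = 0 := by
  have hne (i : U) : v ≠ f i := fun h => hv ⟨i, h.symm⟩
  simp [zeroExtend, mul_apply, one_apply, hne]

lemma isSymm_zeroExtend {A : Matrix U U S} (hA : A.IsSymm) (f : U → V) :
    (zeroExtend f A).IsSymm := by
  simp [zeroExtend, IsSymm, transpose_mul, hA.eq, Matrix.mul_assoc]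

lemma rank_zeroExtend_le [StrongRankCondition S] [Fintype V] (f : U → V) (A : Matrix U U S) :
    (zeroExtend f A).rank ≤ A.rank :=
  (rank_mul_le_left _ _).trans (rank_mul_le_right _ _)

end ZeroExtend

section MinRank

variable {F U V : Type*} [Field F] {G : SimpleGraph V}

lemma isGraphMatrix_adjMatrix (F : Type*) [Field F] (G : SimpleGraph V) [DecidableRel G.Adj] :
    IsGraphMatrix F G (G.adjMatrix F) :=
  ⟨G.isSymm_adjMatrix, fun i j _ => by simp [SimpleGraph.adjMatrix_apply]⟩

lemma IsGraphMatrix.submatrix {A : Matrix V V F} (hA : IsGraphMatrix F G A) (f : U ↪ V) :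
    IsGraphMatrix F (G.comap f) (A.submatrix f f) :=
  ⟨hA.1.submatrix f, fun i j hij => hA.2 (f i) (f j) (f.injective.ne hij)⟩

lemma IsGraphMatrix.zeroExtend [Fintype U] [DecidableEq V] {f : U ↪ V} {A : Matrix U U F}
    (hA : IsGraphMatrix F (G.comap f) A) (hG : ∀ v ∉ Set.range f, G.IsIsolated v) :
    IsGraphMatrix F G (zeroExtend f A) := by
  have hsymm := isSymm_zeroExtend hA.1 f
  refine ⟨hsymm, fun v w hvw => ?_⟩
  by_cases hv : v ∈ Set.range f
  · by_cases hw : w ∈ Set.range f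
    · obtain ⟨i, rfl⟩ := hv
      obtain ⟨j, rfl⟩ := hw
      rw [zeroExtend_apply_apply]
      exact hA.2 i j (mt (congrArg f) hvw)
    · simp [← hsymm.apply v w, zeroExtend_apply_eq_zero hw, G.adj_comm v w, hG w hw v]
  · simp [zeroExtend_apply_eq_zero hv, hG v hv w]

variable [Fintype V]

lemma minRank_le_rank {A : Matrix V V F} (hA : IsGraphMatrix F G A) : minRank F G ≤ A.rank :=
  Nat.sInf_le ⟨A, hA, rfl⟩

lemma exists_rank_eq_minRank (F : Type*) [Field F] (G : SimpleGraph V) :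
    ∃ A : Matrix V V F, IsGraphMatrix F G A ∧ A.rank = minRank F G := by
  classical
  exact Nat.sInf_mem (s := {r | ∃ A : Matrix V V F, IsGraphMatrix F G A ∧ A.rank = r})
    ⟨_, G.adjMatrix F, isGraphMatrix_adjMatrix F G, rfl⟩

variable [Fintype U]

lemma minRank_le_minRank_comap_of_isIsolated {f : U ↪ V}
    (hG : ∀ v ∉ Set.range f, G.IsIsolated v) : minRank F G ≤ minRank F (G.comap f) := by
  classical
  obtain ⟨A, hA, hrank⟩ := exists_rank_eq_minRank F (G.comap f)
  calc
    minRank F G ≤ (zeroExtend f A).rank := minRank_le_rank (hA.zeroExtend hG)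
    _ ≤ A.rank := rank_zeroExtend_le f A
    _ = minRank F (G.comap f) := hrank

lemma isIsolated_of_minRank_le_minRank_comap {f : U ↪ V}
    (hrank : minRank F G ≤ minRank F (G.comap f)) {z : V} (hz : z ∉ Set.range f)
    (hadj : ∀ i, ¬ G.Adj z (f i)) : G.IsIsolated z := by
  obtain ⟨A, hA, hArank⟩ := exists_rank_eq_minRank F G
  have hle : A.rank ≤ (A.submatrix f f).rank :=
    hArank.trans_le (hrank.trans (minRank_le_rank (hA.submatrix f)))
  have hzero (i : U) : A (f i) z = 0 := by
    by_contra h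
    exact hadj i ((hA.2 (f i) z fun hi => hz ⟨i, hi⟩).1 h).symm
  have hcol := col_eq_zero_of_rank_le_rank_submatrix hle hzero
  exact fun y hzy => (hA.2 y z hzy.ne').2 hzy.symm (congrFun hcol y)

end MinRank

section VertexDeletion

variable {F V : Type*} [Field F] [Fintype V] [DecidableEq V] {G : SimpleGraph V}

lemma minRank_le_minRank_deleteVert_of_isIsolated {z : V} (hz : G.IsIsolated z) :
    minRank F G ≤ minRank F (deleteVert G z) := by
  refine minRank_le_minRank_comap_of_isIsolated (f := .subtype (· ≠ z)) fun v hv => ?_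
  obtain rfl : v = z := by simpa using hv
  exact hz

lemma not_adj_of_minRank_deleteVert_le_minRank_inducedSub {W : Finset V} {u z : V}
    (hrank : minRank F (deleteVert G u) ≤ minRank F (inducedSub G W))
    (hu : u ∉ W) (hzW : z ∉ W) (hzu : z ≠ u) (hz : ∀ w ∈ W, ¬ G.Adj z w) {y : V} (hyu : y ≠ u) :
    ¬ G.Adj z y := by
  let f : {x // x ∈ W} ↪ {x // x ≠ u} :=
    Subtype.impEmbedding (· ∈ W) (· ≠ u) fun _ hw => ne_of_mem_of_not_mem hw hu
  have hzf : (⟨z, hzu⟩ : {x // x ≠ u}) ∉ Set.range f := by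
    rintro ⟨w, hw⟩
    obtain rfl : (w : V) = z := congrArg Subtype.val hw
    exact hzW w.2
  have hiso : (deleteVert G u).IsIsolated ⟨z, hzu⟩ :=
    isIsolated_of_minRank_le_minRank_comap (f := f) hrank hzf fun w => hz w w.2
  exact hiso ⟨y, hyu⟩

end VertexDeletion

theorem no_zero_weight_vertex_general (F : Type*) [Field F] {V : Type*} [Fintype V]
    [DecidableEq V] (G : SimpleGraph V) (W : Finset V)
    (hG : minRank F (inducedSub G W) < minRank F G)
    (hdel : ∀ v : V, v ∉ W → minRank F (deleteVert G v) ≤ minRank F (inducedSub G W))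
    (hcard : 3 ≤ Wᶜ.card) :
    ∀ v : V, v ∉ W → ∃ w ∈ W, G.Adj v w := by
  intro z hzW
  by_contra! hz
  have hiso : G.IsIsolated z := fun y => by
    obtain ⟨u, huW, hu⟩ : ∃ u ∈ Wᶜ, u ∉ ({z, y} : Finset V) :=
      Finset.exists_mem_notMem_of_card_lt_card (Finset.card_le_two.trans_lt hcard)
    rw [Finset.mem_compl] at huW
    simp only [Finset.mem_insert, Finset.mem_singleton, not_or] at hu
    exact not_adj_of_minRank_deleteVert_le_minRank_inducedSub (hdel u huW) huW hzW
      (Ne.symm hu.1) hz (Ne.symm hu.2)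
  exact hG.not_ge ((minRank_le_minRank_deleteVert_of_isIsolated hiso).trans (hdel z hzW))

/-- Let `H = G[W]` be an induced subgraph of `G` with `mr(F₂, H) = k`, and suppose
`G ∈ F_{k+1}(F₂, H)` (witnessed by this copy of `H`).  If `|V(G)| - |V(H)| ≥ 3`, then
every vertex of `G - H` is adjacent in `G` to at least one vertex of `H`
(no vertex of `G - H` has zero weight vector). -/
theorem no_zero_weight_vertex {V : Type*} [Fintype V] [DecidableEq V]
    (G : SimpleGraph V) (W : Finset V) (k : ℕ)
    (hH : minRank (ZMod 2) (inducedSub G W) = k)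
    (hG : k + 1 ≤ minRank (ZMod 2) G)
    (hdel : ∀ v : V, v ∉ W → minRank (ZMod 2) (deleteVert G v) ≤ k)
    (hcard : 3 ≤ Wᶜ.card) :
    ∀ v : V, v ∉ W → ∃ w ∈ W, G.Adj v w := by
  subst hH
  exact no_zero_weight_vertex_general (ZMod 2) G W hG hdel hcard
end

section
/- If G ∈ F₄(F₂, P₃∪K₂), then |V(G)| ≤ 8. Here P₃∪K₂ is the disjoint union of the path on 3 vertices and a single edge. -/
/-!
Fix an induced copy of `P₃ ∪ K₂` in `G`, the core. Over `F₂` it carries exactly three matrices of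
rank at most 3, all of rank 3. A symmetric matrix of rank 3 with core block `D` is determined by its
columns over the core: it is `C E Cᵀ`, where `C` consists of these columns and `E` is any
generalized inverse of `D`. So `mr(F₂, G) ≤ 3` holds if and only if, for one of the three choices of
`D`, the row over the core of every outside vertex lies in the column space of `D`, and `E`
evaluates on two such rows to the adjacency of their vertices.

Suppose that all three choices fail; then they fail on three outside vertices. The first two
matrices have the same column space, so a vertex whose row lies outside it defeats both, and two
more vertices defeat the third. If there is no such vertex, whatever defeats the first choice also
defeats the third, and the forms of the first two differ by `r₀ s₀`. A pair defeating only one of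
them therefore consists of neighbours of core vertex `0`, and any two such neighbours defeat one of
the two, which allows the pairs defeating the first and the second choice to be taken inside a
triple. Deleting a vertex outside the core and these three would leave minimum rank at least 4, so
there is no such vertex and `G` has at most `5 + 3` vertices.
-/

open Matrix

/-- `G ∈ F_K(F, H)`: `G` contains `H` as an induced subgraph, `mr(F, G) ≥ K`, and for
some induced copy of `H` in `G` (an embedding `f : H ↪g G`), `mr(F, G - v) ≤ K - 1`
for every vertex `v` of `G` outside that copy. -/
def MemForbRel (F : Type*) [Field F] (K : ℕ) {VH VG : Type*} [Fintype VH] [Fintype VG]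
    [DecidableEq VG] (H : SimpleGraph VH) (G : SimpleGraph VG) : Prop :=
  K ≤ minRank F G ∧
    ∃ f : H ↪g G, ∀ v : VG, v ∉ Set.range f → minRank F (deleteVert G v) + 1 ≤ K

/-- `P₃ ∪ K₂`: the disjoint union of the path `0 - 1 - 2` and the edge `34`. -/
def P3unionK2 : SimpleGraph (Fin 5) :=
  SimpleGraph.fromEdgeSet {s(0,1), s(1,2), s(3,4)}

section Extension

variable {F ι κ l m n V : Type*} [Field F]

lemma det_submatrix_eq_zero_of_rank_lt [Fintype n] {r : ℕ} {A : Matrix m n F} (hA : A.rank < r)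
    (p : Fin r → m) (q : Fin r → n) : (A.submatrix p q).det = 0 := by
  by_contra hdet
  have hrank := rank_submatrix_le A p q
  rw [rank_of_det_ne_zero hdet, Fintype.card_fin] at hrank
  omega

lemma exists_submatrix_mul_eq_of_rank_le [Fintype n] [Finite m] [Fintype l] {A : Matrix m n F}
    {q : l → n} (h : A.rank ≤ (A.submatrix id q).rank) :
    ∃ Y : Matrix l n F, A.submatrix id q * Y = A := by
  have hle : LinearMap.range (A.submatrix id q).mulVecLin ≤ LinearMap.range A.mulVecLin := by
    rw [range_mulVecLin, range_mulVecLin]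
    exact Submodule.span_mono (Set.range_subset_iff.2 fun j => ⟨q j, rfl⟩)
  have hrange := Submodule.eq_of_le_of_finrank_le hle h
  have hcol (j : n) : ∃ y, A.submatrix id q *ᵥ y = A.col j := by
    have hj : A.col j ∈ LinearMap.range A.mulVecLin := by
      rw [range_mulVecLin]
      exact Submodule.subset_span ⟨j, rfl⟩
    rwa [← hrange] at hj
  choose y hy using hcol
  exact ⟨(of y)ᵀ, Matrix.ext fun i j => congrFun (hy j) i⟩

theorem eq_submatrix_mul_mul_submatrix_of_rank_le [Finite m] [Fintype n] [Fintype κ] [Fintype l]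
    {A : Matrix m n F} {p : κ → m} {q : l → n} {E : Matrix l κ F}
    (hE : A.submatrix p q * E * A.submatrix p q = A.submatrix p q)
    (h : A.rank ≤ (A.submatrix p q).rank) :
    A = A.submatrix id q * E * A.submatrix p id := by
  have := Fintype.ofFinite m
  obtain ⟨Y, hY⟩ := exists_submatrix_mul_eq_of_rank_le
    (h.trans (rank_submatrix_le (A.submatrix id q) p id))
  obtain ⟨X, hX⟩ : ∃ X : Matrix m κ F, X * A.submatrix p id = A := by
    obtain ⟨Z, hZ⟩ := exists_submatrix_mul_eq_of_rank_le (A := Aᵀ) (q := p) (by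
      rw [← transpose_submatrix, rank_transpose, rank_transpose]
      exact h.trans (rank_submatrix_le (A.submatrix p id) id q))
    exact ⟨Zᵀ, by rw [← transpose_inj, transpose_mul, transpose_transpose, transpose_submatrix, hZ]⟩
  have hrow : A.submatrix p q * Y = A.submatrix p id := congrArg (submatrix · p id) hY
  have hcol : X * A.submatrix p q = A.submatrix id q := congrArg (submatrix · id q) hX
  calc
    A = X * (A.submatrix p q * Y) := by rw [hrow, hX]
    _ = X * (A.submatrix p q * E * A.submatrix p q * Y) := by rw [hE]
    _ = X * A.submatrix p q * E * (A.submatrix p q * Y) := by simp only [Matrix.mul_assoc]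
    _ = A.submatrix id q * E * A.submatrix p id := by rw [hcol, hrow]

variable [Fintype κ]

/-- The condition on the rows indexed by `W` under which the symmetric matrix `A`, whose diagonal is
unspecified, extends its core block `D` (indexed by `f`) without raising the rank. Here `E` stands
for a generalized inverse of `D`, i.e. `D * E * D = D`: the part of each row lying over the core is
in the column space of `D`, and the off-diagonal entries are the values of the bilinear form `E` on
these parts. -/
def ConsistentOn (D E : Matrix κ κ F) (f : κ → V) (A : Matrix V V F) (W : Set V) : Prop :=
  (∀ v ∈ W, D *ᵥ E *ᵥ (A v ∘ f) = A v ∘ f) ∧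
    W.Pairwise fun v w => (A v ∘ f) ⬝ᵥ E *ᵥ (A w ∘ f) = A v w

variable {D E : Matrix κ κ F} {f : κ → V} {A : Matrix V V F} {W W' : Set V}

lemma ConsistentOn.mono (h : ConsistentOn D E f A W) (hW : W' ⊆ W) : ConsistentOn D E f A W' :=
  ⟨fun v hv => h.1 v (hW hv), h.2.mono hW⟩

lemma exists_card_le_two_not_consistentOn (h : ¬ ConsistentOn D E f A W) :
    ∃ T : Finset V, ↑T ⊆ W ∧ T.card ≤ 2 ∧ ¬ ConsistentOn D E f A T := by
  classical
  by_contra! hT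
  refine h ⟨fun v hv => ?_, fun v hv w hw hvw => ?_⟩
  · exact (hT {v} (by simpa using hv) (by simp)).1 v (by simp)
  · exact (hT {v, w} (by simp [Set.insert_subset_iff, hv, hw]) Finset.card_le_two).2
      (by simp) (by simp) hvw

theorem exists_isSymm_rank_le_of_consistentOn [Fintype V] (hf : f.Injective) (hA : A.IsSymm)
    (hD : D.IsSymm) (hDA : ∀ k l, k ≠ l → D k l = A (f k) (f l))
    (h : ConsistentOn D E f A (Set.range f)ᶜ) :
    ∃ B : Matrix V V F, B.IsSymm ∧ (∀ v w, v ≠ w → B v w = A v w) ∧ B.rank ≤ D.rank := by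
  classical
  let X : Matrix V κ F := Function.extend f (fun k => Pi.single k 1) fun v => E *ᵥ (A v ∘ f)
  have hX_core (k : κ) : X (f k) = Pi.single k 1 :=
    hf.extend_apply (fun k => (Pi.single k 1 : κ → F)) _ k
  have hX_out {v : V} (hv : v ∉ Set.range f) : X v = E *ᵥ (A v ∘ f) :=
    Function.extend_apply' _ (fun v => E *ᵥ (A v ∘ f)) v hv
  have hDX (w : V) (k : κ) (hk : f k ≠ w) : (D *ᵥ X w) k = A (f k) w := by
    by_cases hw : w ∈ Set.range f
    · obtain ⟨l, rfl⟩ := hw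
      rw [hX_core, mulVec_single_one]
      exact hDA k l (ne_of_apply_ne f hk)
    · rw [hX_out hw, h.1 w hw]
      exact hA.apply (f k) w
  have hB_apply (v w : V) : (X * D * Xᵀ) v w = X v ⬝ᵥ D *ᵥ X w := by
    rw [Matrix.mul_assoc, mul_apply']
    rfl
  have hB_symm : (X * D * Xᵀ).IsSymm := by
    rw [IsSymm, transpose_mul, transpose_mul, transpose_transpose, hD.eq, Matrix.mul_assoc]
  have hB_core (k : κ) (w : V) (hk : f k ≠ w) : (X * D * Xᵀ) (f k) w = A (f k) w := by
    rw [hB_apply, hX_core, single_one_dotProduct, hDX w k hk]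
  refine ⟨X * D * Xᵀ, hB_symm, fun v w hvw => ?_, ?_⟩
  · by_cases hv : v ∈ Set.range f
    · obtain ⟨k, rfl⟩ := hv
      exact hB_core k w hvw
    by_cases hw : w ∈ Set.range f
    · obtain ⟨k, rfl⟩ := hw
      rw [← hB_symm.apply, hB_core k v hvw.symm, hA.apply]
    · rw [← hB_symm.apply, hB_apply, hX_out hv, h.1 v hv, hX_out hw, dotProduct_comm,
        h.2 hv hw hvw]
  · exact (rank_mul_le_left _ _).trans (rank_mul_le_right _ _)

theorem consistentOn_image_of_rank_le [Fintype ι] {B : Matrix ι ι F} {e : ι → V} {g : κ → ι}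
    (hB : B.IsSymm) (hBA : ∀ i j, i ≠ j → B i j = A (e i) (e j))
    (hE : B.submatrix g g * E * B.submatrix g g = B.submatrix g g)
    (hrank : B.rank ≤ (B.submatrix g g).rank) :
    ConsistentOn (B.submatrix g g) E (e ∘ g) A (e '' (Set.range g)ᶜ) := by
  have hfactor := eq_submatrix_mul_mul_submatrix_of_rank_le hE hrank
  have hrow {i : ι} (hi : i ∉ Set.range g) : A (e i) ∘ e ∘ g = B i ∘ g :=
    funext fun k => (hBA i (g k) fun hk => hi ⟨k, hk.symm⟩).symm
  have hform (i j : ι) : (B i ∘ g) ⬝ᵥ E *ᵥ (B j ∘ g) = B i j := by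
    have hcol : B j ∘ g = fun k => B (g k) j := funext fun k => hB.apply (g k) j
    conv_rhs => rw [hfactor, Matrix.mul_assoc, mul_apply']
    rw [hcol]
    rfl
  refine ⟨?_, ?_⟩
  · rintro _ ⟨i, hi, rfl⟩
    rw [hrow hi]
    ext k
    exact (hform (g k) i).trans (hB.apply i (g k))
  · rintro _ ⟨i, hi, rfl⟩ _ ⟨j, hj, rfl⟩ hij
    rw [hrow hi, hrow hj, hform, hBA i j (ne_of_apply_ne e hij)]

end Extension

section MinRank

lemma minRank_le_of_isGraphMatrix {F V : Type*} [Field F] [Fintype V] {G : SimpleGraph V}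
    {A : Matrix V V F} (hA : IsGraphMatrix F G A) : minRank F G ≤ A.rank :=
  Nat.sInf_le ⟨A, hA, rfl⟩

lemma exists_isGraphMatrix_rank_eq_minRank (F : Type*) {V : Type*} [Field F] [Fintype V]
    (G : SimpleGraph V) : ∃ A : Matrix V V F, IsGraphMatrix F G A ∧ A.rank = minRank F G := by
  classical
  refine Nat.sInf_mem (s := {r | ∃ A : Matrix V V F, IsGraphMatrix F G A ∧ A.rank = r})
    ⟨_, G.adjMatrix F, ⟨G.isSymm_adjMatrix, fun i j _ => ?_⟩, rfl⟩
  simp [SimpleGraph.adjMatrix_apply]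

variable {κ V : Type*} {H : SimpleGraph κ} {G : SimpleGraph V}

lemma isGraphMatrix_zmod_two_iff [DecidableRel G.Adj] {A : Matrix V V (ZMod 2)} :
    IsGraphMatrix (ZMod 2) G A ↔
      A.IsSymm ∧ ∀ i j, i ≠ j → A i j = G.adjMatrix (ZMod 2) i j := by
  have ne_zero_iff (a : ZMod 2) (p : Prop) [Decidable p] :
      (a ≠ 0 ↔ p) ↔ a = if p then 1 else 0 := by
    by_cases hp : p <;> revert a <;> simp only [hp] <;> decide
  simp only [IsGraphMatrix, SimpleGraph.adjMatrix_apply, ne_zero_iff]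

variable [Fintype κ] [Fintype V]

theorem minRank_le_rank_of_consistentOn [DecidableRel G.Adj] {D E : Matrix κ κ (ZMod 2)}
    (f : H ↪g G) (hD : IsGraphMatrix (ZMod 2) H D)
    (h : ConsistentOn D E f (G.adjMatrix (ZMod 2)) (Set.range f)ᶜ) :
    minRank (ZMod 2) G ≤ D.rank := by
  classical
  obtain ⟨hD_symm, hD_adj⟩ := isGraphMatrix_zmod_two_iff.1 hD
  obtain ⟨B, hB_symm, hB_adj, hB_rank⟩ := exists_isSymm_rank_le_of_consistentOn f.injective
    G.isSymm_adjMatrix hD_symm (fun k l hkl => by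
      rw [hD_adj k l hkl, ← f.submatrix_adjMatrix (ZMod 2), submatrix_apply]) h
  exact (minRank_le_of_isGraphMatrix (isGraphMatrix_zmod_two_iff.2 ⟨hB_symm, hB_adj⟩)).trans hB_rank

theorem exists_consistentOn_of_minRank_deleteVert_le [DecidableEq V] [DecidableRel G.Adj]
    (f : H ↪g G) {z : V} (hz : z ∉ Set.range f)
    (h : minRank (ZMod 2) (deleteVert G z) ≤ minRank (ZMod 2) H) :
    ∃ D : Matrix κ κ (ZMod 2), IsGraphMatrix (ZMod 2) H D ∧ D.rank ≤ minRank (ZMod 2) H ∧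
      ∀ E, D * E * D = D →
        ConsistentOn D E f (G.adjMatrix (ZMod 2)) ((Set.range f)ᶜ \ {z}) := by
  classical
  obtain ⟨B, hB, hB_rank⟩ := exists_isGraphMatrix_rank_eq_minRank (ZMod 2) (deleteVert G z)
  let g : H ↪g deleteVert G z :=
    { toFun := fun k => ⟨f k, fun hk => hz ⟨k, hk⟩⟩
      inj' := fun _ _ hkl => f.injective (congrArg Subtype.val hkl)
      map_rel_iff' := f.map_rel_iff }
  have hD : IsGraphMatrix (ZMod 2) H (B.submatrix g g) :=
    ⟨hB.1.submatrix g, fun k l hkl => (hB.2 _ _ (g.injective.ne hkl)).trans g.map_adj_iff⟩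
  refine ⟨B.submatrix g g, hD, (rank_submatrix_le B g g).trans (hB_rank.trans_le h),
    fun E hE => ?_⟩
  have hB_adj (i j) (hij : i ≠ j) : B i j = G.adjMatrix (ZMod 2) i.1 j.1 :=
    ((isGraphMatrix_zmod_two_iff.1 hB).2 i j hij).trans (if_congr Iff.rfl rfl rfl)
  refine (consistentOn_image_of_rank_le hB.1 hB_adj hE
    ((hB_rank.trans_le h).trans (minRank_le_of_isGraphMatrix hD))).mono ?_
  rintro v ⟨hv, hvz⟩
  exact ⟨⟨v, hvz⟩, fun ⟨k, hk⟩ => hv ⟨k, congrArg Subtype.val hk⟩, rfl⟩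

end MinRank

section Core

instance : DecidableRel P3unionK2.Adj := by
  unfold P3unionK2
  infer_instance

/-- The diagonals for which a matrix over `F₂` with graph `P₃ ∪ K₂` has rank 3. -/
def coreDiag : Fin 3 → Fin 5 → ZMod 2 :=
  ![![0, 0, 0, 1, 1], ![0, 1, 0, 1, 1], ![1, 0, 1, 1, 1]]

/-- The three matrices of rank 3 in `S(F₂, P₃ ∪ K₂)`. -/
def coreMatrix (i : Fin 3) : Matrix (Fin 5) (Fin 5) (ZMod 2) :=
  P3unionK2.adjMatrix (ZMod 2) + diagonal (coreDiag i)

/-- Three core vertices whose principal submatrix in `coreMatrix i` is invertible. -/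
def corePivot : Fin 3 → Fin 3 → Fin 5 :=
  ![![0, 1, 3], ![0, 1, 3], ![0, 2, 3]]

/-- A generalized inverse of `coreMatrix i`: the inverse of the principal submatrix on
`corePivot i`, padded by zeros. -/
def coreInv : Fin 3 → Matrix (Fin 5) (Fin 5) (ZMod 2) :=
  ![!![0, 1, 0, 0, 0; 1, 0, 0, 0, 0; 0, 0, 0, 0, 0; 0, 0, 0, 1, 0; 0, 0, 0, 0, 0],
    !![1, 1, 0, 0, 0; 1, 0, 0, 0, 0; 0, 0, 0, 0, 0; 0, 0, 0, 1, 0; 0, 0, 0, 0, 0],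
    !![1, 0, 0, 0, 0; 0, 0, 0, 0, 0; 0, 0, 1, 0, 0; 0, 0, 0, 1, 0; 0, 0, 0, 0, 0]]

lemma coreMatrix_mul_coreInv_mul_coreMatrix (i : Fin 3) :
    coreMatrix i * coreInv i * coreMatrix i = coreMatrix i := by
  revert i
  decide

lemma rank_coreMatrix (i : Fin 3) : (coreMatrix i).rank = 3 := by
  apply le_antisymm
  · have hfactor : coreMatrix i = (coreMatrix i).submatrix id (corePivot i) *
        ((coreInv i).submatrix (corePivot i) (corePivot i) *
          (coreMatrix i).submatrix (corePivot i) id) := by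
      revert i
      decide
    rw [hfactor]
    exact (rank_mul_le_left _ _).trans (rank_le_width _)
  · have hdet : ((coreMatrix i).submatrix (corePivot i) (corePivot i)).det ≠ 0 := by
      revert i
      decide
    calc 3 = ((coreMatrix i).submatrix (corePivot i) (corePivot i)).rank := by
          rw [rank_of_det_ne_zero hdet, Fintype.card_fin]
      _ ≤ (coreMatrix i).rank := rank_submatrix_le _ _ _

lemma isGraphMatrix_coreMatrix (i : Fin 3) :
    IsGraphMatrix (ZMod 2) P3unionK2 (coreMatrix i) :=
  isGraphMatrix_zmod_two_iff.2
    ⟨P3unionK2.isSymm_adjMatrix.add (isSymm_diagonal _), fun k l hkl => by simp [coreMatrix, hkl]⟩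

lemma det_adjMatrix_P3unionK2_add_diagonal_edge (x : Fin 5 → ZMod 2) :
    ((P3unionK2.adjMatrix (ZMod 2) + diagonal x).submatrix ![0, 1, 3, 4] ![1, 2, 3, 4]).det =
      x 3 * x 4 - 1 := by
  revert x
  decide +kernel

lemma det_adjMatrix_P3unionK2_add_diagonal_path (x : Fin 5 → ZMod 2) :
    ((P3unionK2.adjMatrix (ZMod 2) + diagonal x).submatrix ![0, 1, 2, 3] ![0, 1, 2, 3]).det =
      x 3 * (x 0 * x 1 * x 2 - x 0 - x 2) := by
  revert x
  decide +kernel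

lemma exists_eq_coreDiag {x : Fin 5 → ZMod 2} (hedge : x 3 * x 4 = 1)
    (hpath : x 3 * (x 0 * x 1 * x 2 - x 0 - x 2) = 0) : ∃ i, x = coreDiag i := by
  revert x
  decide

lemma exists_eq_coreMatrix_of_rank_le {D : Matrix (Fin 5) (Fin 5) (ZMod 2)}
    (hD : IsGraphMatrix (ZMod 2) P3unionK2 D) (hrank : D.rank ≤ 3) : ∃ i, D = coreMatrix i := by
  obtain ⟨x, rfl⟩ : ∃ x, D = P3unionK2.adjMatrix (ZMod 2) + diagonal x := by
    refine ⟨D.diag, Matrix.ext fun k l => ?_⟩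
    rcases eq_or_ne k l with rfl | hkl
    · simp
    · simp [(isGraphMatrix_zmod_two_iff.1 hD).2 k l hkl, hkl]
  have minor_eq_zero := det_submatrix_eq_zero_of_rank_lt (Nat.lt_succ_of_le hrank)
  have hedge : x 3 * x 4 = 1 := by
    rw [← sub_eq_zero, ← det_adjMatrix_P3unionK2_add_diagonal_edge, minor_eq_zero]
  have hpath : x 3 * (x 0 * x 1 * x 2 - x 0 - x 2) = 0 := by
    rw [← det_adjMatrix_P3unionK2_add_diagonal_path, minor_eq_zero]
  obtain ⟨i, rfl⟩ := exists_eq_coreDiag hedge hpath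
  exact ⟨i, rfl⟩

theorem minRank_P3unionK2 : minRank (ZMod 2) P3unionK2 = 3 := by
  apply le_antisymm
  · exact (minRank_le_of_isGraphMatrix (isGraphMatrix_coreMatrix 0)).trans_eq (rank_coreMatrix 0)
  · obtain ⟨D, hD, hrank⟩ := exists_isGraphMatrix_rank_eq_minRank (ZMod 2) P3unionK2
    by_contra! hlt
    obtain ⟨i, rfl⟩ := exists_eq_coreMatrix_of_rank_le hD (hrank.trans_le hlt.le)
    rw [rank_coreMatrix] at hrank
    omega

lemma coreMatrix_zero_mulVec_coreInv_eq_iff (r : Fin 5 → ZMod 2) :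
    coreMatrix 0 *ᵥ coreInv 0 *ᵥ r = r ↔ r 2 = r 0 ∧ r 4 = r 3 := by
  revert r
  decide

lemma coreMatrix_one_mulVec_coreInv_eq_iff (r : Fin 5 → ZMod 2) :
    coreMatrix 1 *ᵥ coreInv 1 *ᵥ r = r ↔ r 2 = r 0 ∧ r 4 = r 3 := by
  revert r
  decide

lemma coreMatrix_two_mulVec_coreInv_eq_iff (r : Fin 5 → ZMod 2) :
    coreMatrix 2 *ᵥ coreInv 2 *ᵥ r = r ↔ r 1 = r 0 + r 2 ∧ r 4 = r 3 := by
  revert r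
  decide

lemma dotProduct_coreInv_zero_mulVec (r s : Fin 5 → ZMod 2) :
    r ⬝ᵥ coreInv 0 *ᵥ s = r 0 * s 1 + r 1 * s 0 + r 3 * s 3 := by
  simp [coreInv, dotProduct, mulVec, Fin.sum_univ_succ, add_assoc]

lemma dotProduct_coreInv_one_mulVec (r s : Fin 5 → ZMod 2) :
    r ⬝ᵥ coreInv 1 *ᵥ s = r ⬝ᵥ coreInv 0 *ᵥ s + r 0 * s 0 := by
  have hcoreInv : coreInv 1 = coreInv 0 + vecMulVec (Pi.single 0 1) (Pi.single 0 1) := by decide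
  rw [hcoreInv, add_mulVec, dotProduct_add, vecMulVec_mulVec]
  simp [mul_comm]

lemma dotProduct_coreInv_two_mulVec (r s : Fin 5 → ZMod 2) :
    r ⬝ᵥ coreInv 2 *ᵥ s = r 0 * s 0 + r 2 * s 2 + r 3 * s 3 := by
  simp [coreInv, dotProduct, mulVec, Fin.sum_univ_succ, add_assoc]

lemma dotProduct_coreInv_zero_eq_two {r s : Fin 5 → ZMod 2}
    (hr₀ : coreMatrix 0 *ᵥ coreInv 0 *ᵥ r = r) (hs₀ : coreMatrix 0 *ᵥ coreInv 0 *ᵥ s = s)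
    (hr₂ : coreMatrix 2 *ᵥ coreInv 2 *ᵥ r = r) (hs₂ : coreMatrix 2 *ᵥ coreInv 2 *ᵥ s = s) :
    r ⬝ᵥ coreInv 0 *ᵥ s = r ⬝ᵥ coreInv 2 *ᵥ s := by
  rw [coreMatrix_zero_mulVec_coreInv_eq_iff] at hr₀ hs₀
  rw [coreMatrix_two_mulVec_coreInv_eq_iff] at hr₂ hs₂
  have hr : r 1 = 0 := by rw [hr₂.1, hr₀.1, CharTwo.add_self_eq_zero]
  have hs : s 1 = 0 := by rw [hs₂.1, hs₀.1, CharTwo.add_self_eq_zero]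
  rw [dotProduct_coreInv_zero_mulVec, dotProduct_coreInv_two_mulVec, hr, hs, hr₀.1, hs₀.1,
    CharTwo.add_self_eq_zero, mul_zero, zero_mul, zero_add]

end Core

section Triple

lemma exists_triple_not_pairwise {α : Type*} {P Q : α → α → Prop} {W S : Set α}
    (hS : S.Pairwise fun a b => ¬ (P a b ∧ Q a b))
    (hW : W.Pairwise fun a b => (P a b ↔ Q a b) ∨ a ∈ S ∧ b ∈ S)
    (hP : ¬ W.Pairwise P) (hQ : ¬ W.Pairwise Q) :
    ∃ x ∈ W, ∃ y ∈ W, ∃ z ∈ W,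
      ¬ ({x, y, z} : Set α).Pairwise P ∧ ¬ ({x, y, z} : Set α).Pairwise Q := by
  have not_pairwise {T : Set α} {R : α → α → Prop} {x y : α} (hne : x ≠ y) (hR : ¬ R x y)
      (hx : x ∈ T) (hy : y ∈ T) : ¬ T.Pairwise R := fun h => hR (h hx hy hne)
  obtain ⟨a, ha, b, hb, hab, hPab⟩ : ∃ a ∈ W, ∃ b ∈ W, a ≠ b ∧ ¬ P a b := by
    simpa [Set.Pairwise] using hP
  obtain ⟨c, hc, d, hd, hcd, hQcd⟩ : ∃ c ∈ W, ∃ d ∈ W, c ≠ d ∧ ¬ Q c d := by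
    simpa [Set.Pairwise] using hQ
  by_cases hQab : ¬ Q a b
  · exact ⟨a, ha, b, hb, b, hb, not_pairwise hab hPab (by simp) (by simp),
      not_pairwise hab hQab (by simp) (by simp)⟩
  by_cases hPcd : ¬ P c d
  · exact ⟨c, hc, d, hd, d, hd, not_pairwise hcd hPcd (by simp) (by simp),
      not_pairwise hcd hQcd (by simp) (by simp)⟩
  have hbS : b ∈ S := ((hW ha hb hab).resolve_left (by tauto)).2
  have hcS : c ∈ S := ((hW hc hd hcd).resolve_left (by tauto)).1
  -- The pair `b, c` violates `P` or `Q`, which links the two given pairs.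
  rcases eq_or_ne b c with rfl | hbc
  · exact ⟨a, ha, b, hb, d, hd, not_pairwise hab hPab (by simp) (by simp),
      not_pairwise hcd hQcd (by simp) (by simp)⟩
  rcases not_and_or.1 (hS hbS hcS hbc) with hPbc | hQbc
  · exact ⟨b, hb, c, hc, d, hd, not_pairwise hbc hPbc (by simp) (by simp),
      not_pairwise hcd hQcd (by simp) (by simp)⟩
  · exact ⟨a, ha, b, hb, c, hc, not_pairwise hab hPab (by simp) (by simp),
      not_pairwise hbc hQbc (by simp) (by simp)⟩

variable {V : Type*} {f : Fin 5 → V} {A : Matrix V V (ZMod 2)} {W : Set V}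

lemma ConsistentOn.coreMatrix_zero_of_two
    (h₀ : ∀ v ∈ W, coreMatrix 0 *ᵥ coreInv 0 *ᵥ (A v ∘ f) = A v ∘ f)
    (h₂ : ConsistentOn (coreMatrix 2) (coreInv 2) f A W) :
    ConsistentOn (coreMatrix 0) (coreInv 0) f A W :=
  ⟨h₀, fun v hv w hw hvw => (dotProduct_coreInv_zero_eq_two (h₀ v hv) (h₀ w hw) (h₂.1 v hv)
    (h₂.1 w hw)).trans (h₂.2 hv hw hvw)⟩

lemma exists_triple_not_consistentOn_zero_one
    (hcompat : ∀ v ∈ W, coreMatrix 0 *ᵥ coreInv 0 *ᵥ (A v ∘ f) = A v ∘ f)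
    (h₀ : ¬ ConsistentOn (coreMatrix 0) (coreInv 0) f A W)
    (h₁ : ¬ ConsistentOn (coreMatrix 1) (coreInv 1) f A W) :
    ∃ x ∈ W, ∃ y ∈ W, ∃ z ∈ W, ¬ ConsistentOn (coreMatrix 0) (coreInv 0) f A {x, y, z} ∧
      ¬ ConsistentOn (coreMatrix 1) (coreInv 1) f A {x, y, z} := by
  have hform (v w : V) : (A v ∘ f) ⬝ᵥ coreInv 1 *ᵥ (A w ∘ f) =
      (A v ∘ f) ⬝ᵥ coreInv 0 *ᵥ (A w ∘ f) + A v (f 0) * A w (f 0) :=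
    dotProduct_coreInv_one_mulVec _ _
  have hcompat₁ : ∀ v ∈ W, coreMatrix 1 *ᵥ coreInv 1 *ᵥ (A v ∘ f) = A v ∘ f := fun v hv =>
    (coreMatrix_one_mulVec_coreInv_eq_iff _).2
      ((coreMatrix_zero_mulVec_coreInv_eq_iff _).1 (hcompat v hv))
  obtain ⟨x, hx, y, hy, z, hz, hP, hQ⟩ := exists_triple_not_pairwise
    (S := {v | A v (f 0) ≠ 0}) (W := W)
    (P := fun v w => (A v ∘ f) ⬝ᵥ coreInv 0 *ᵥ (A w ∘ f) = A v w)
    (Q := fun v w => (A v ∘ f) ⬝ᵥ coreInv 1 *ᵥ (A w ∘ f) = A v w)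
    (fun v hv w hw _ ⟨hP, hQ⟩ => mul_ne_zero hv hw (by rwa [hform, hP, add_eq_left] at hQ))
    (fun v _ w _ _ => by
      by_cases hvw : A v (f 0) * A w (f 0) = 0
      · exact .inl (by rw [hform, hvw, add_zero])
      · exact .inr ⟨left_ne_zero_of_mul hvw, right_ne_zero_of_mul hvw⟩)
    (fun hP => h₀ ⟨hcompat, hP⟩) (fun hQ => h₁ ⟨hcompat₁, hQ⟩)
  exact ⟨x, hx, y, hy, z, hz, fun h => hP h.2, fun h => hQ h.2⟩

theorem exists_card_le_three_not_consistentOn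
    (h : ∀ i, ¬ ConsistentOn (coreMatrix i) (coreInv i) f A W) :
    ∃ T : Finset V, ↑T ⊆ W ∧ T.card ≤ 3 ∧
      ∀ i, ¬ ConsistentOn (coreMatrix i) (coreInv i) f A T := by
  classical
  simp only [Fin.forall_fin_succ, Fin.succ_zero_eq_one, Fin.succ_one_eq_two, IsEmpty.forall_iff,
    and_true] at h ⊢
  obtain ⟨h₀, h₁, h₂⟩ := h
  by_cases hcompat : ∀ v ∈ W, coreMatrix 0 *ᵥ coreInv 0 *ᵥ (A v ∘ f) = A v ∘ f
  · obtain ⟨x, hx, y, hy, z, hz, hT₀, hT₁⟩ :=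
      exists_triple_not_consistentOn_zero_one hcompat h₀ h₁
    have hTW : ({x, y, z} : Set V) ⊆ W := by simp [Set.insert_subset_iff, hx, hy, hz]
    refine ⟨{x, y, z}, by simpa using hTW, Finset.card_le_three, ?_⟩
    push_cast
    exact ⟨hT₀, hT₁, fun hT₂ => hT₀ (hT₂.coreMatrix_zero_of_two fun v hv => hcompat v (hTW hv))⟩
  · obtain ⟨v, hv, hv₀⟩ : ∃ v ∈ W, coreMatrix 0 *ᵥ coreInv 0 *ᵥ (A v ∘ f) ≠ A v ∘ f := by
      simpa using hcompat
    have hv₁ : coreMatrix 1 *ᵥ coreInv 1 *ᵥ (A v ∘ f) ≠ A v ∘ f := by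
      rwa [Ne, coreMatrix_one_mulVec_coreInv_eq_iff, ← coreMatrix_zero_mulVec_coreInv_eq_iff]
    obtain ⟨T, hTW, hcard, hT⟩ := exists_card_le_two_not_consistentOn h₂
    exact ⟨insert v T, by simp [Set.insert_subset_iff, hv, hTW],
      (Finset.card_insert_le v T).trans (by omega), fun h => hv₀ (h.1 v (by simp)),
      fun h => hv₁ (h.1 v (by simp)), fun h => hT (h.mono (by simp))⟩

end Triple

/-- If `G ∈ F₄(F₂, P₃ ∪ K₂)`, then `G` has at most 8 vertices. -/
theorem card_le_eight_of_forbRel_P3unionK2 {V : Type*} [Fintype V] [DecidableEq V]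
    (G : SimpleGraph V) (h : MemForbRel (ZMod 2) 4 P3unionK2 G) :
    Fintype.card V ≤ 8 := by
  classical
  obtain ⟨hG, f, hf⟩ := h
  have hcore (i : Fin 3) : ¬ ConsistentOn (coreMatrix i) (coreInv i) f (G.adjMatrix (ZMod 2))
      (Set.range f)ᶜ := fun hi => by
    have hle := minRank_le_rank_of_consistentOn f (isGraphMatrix_coreMatrix i) hi
    rw [rank_coreMatrix] at hle
    omega
  obtain ⟨T, hTf, hTcard, hT⟩ := exists_card_le_three_not_consistentOn hcore
  have hcover (z : V) : z ∈ T ∪ Finset.univ.image f := by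
    by_contra hz
    obtain ⟨hzT, hzf⟩ : z ∉ T ∧ z ∉ Set.range f := by simpa using hz
    obtain ⟨D, hD, hDrank, hDT⟩ := exists_consistentOn_of_minRank_deleteVert_le f hzf
      (minRank_P3unionK2 ▸ Nat.le_of_succ_le_succ (hf z hzf))
    obtain ⟨i, rfl⟩ := exists_eq_coreMatrix_of_rank_le hD (minRank_P3unionK2 ▸ hDrank)
    exact hT i ((hDT _ (coreMatrix_mul_coreInv_mul_coreMatrix i)).mono
      (Set.subset_sdiff_singleton hTf hzT))
  calc
    Fintype.card V ≤ (T ∪ Finset.univ.image f).card := Finset.card_le_card fun z _ => hcover z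
    _ ≤ T.card + (Finset.univ.image f).card := Finset.card_union_le _ _
    _ ≤ 3 + 5 := Nat.add_le_add hTcard Finset.card_image_le
end
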